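/- arXiv:2112.14394 — 2 statements merged into one kernel-verified Lean document; each statement's English description precedes it below -/
import Mathlib

section
/- Let Z₁, Z₂ ∈ ℂ³ with ‖Z₁‖ = ‖Z₂‖ = 1. For a unit vector W ∈ ℂ³ define S_W = {Q·Qᵀ : Q ∈ SU(3), Q·e₁ = W}, where e₁ = (1,0,0)ᵀ. Then S_{Z₁} = S_{Z₂} if and only if Z₁ = Z₂ or Z₁ = −Z₂. -/
/-!
If `Q` is unitary, then `Q Qᵀ` maps `star v` to `v` exactly when the coordinate vector `Qᴴ v` is
real. Every element of `S_W` maps `star W` to `W`, so `S_{Z₁} ⊆ S_{Z₂}` forces `Qᴴ Z₂` to be real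
for each special unitary `Q` with first column `Z₁`. Such a `Q` may still be multiplied by a
diagonal matrix with entries `I` and `-I` at two positions other than the first: this turns a real
coordinate into an imaginary one, so all coordinates of `Qᴴ Z₂` but the first vanish. Hence `Z₂` is
a real multiple of the unit vector `Z₁`, and being itself a unit vector it is `±Z₁`. Conversely,
multiplying `Q` on the right by a diagonal sign matrix of determinant one changes the sign of its
first column and preserves `Q Qᵀ`.
-/

open Matrix

theorem mulSingle_mem_unitary {ι R : Type*} [DecidableEq ι] [Monoid R] [StarMul R] (i : ι) {u : R}
    (hu : u ∈ unitary R) : (Pi.mulSingle i u : ι → R) ∈ unitary (ι → R) := by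
  simp only [Unitary.mem_iff, Pi.star_mulSingle, ← Pi.mulSingle_mul,
    Unitary.star_mul_self_of_mem hu, Unitary.mul_star_self_of_mem hu, Pi.mulSingle_one, and_self]

section StarRing

variable {ι R : Type*} [Fintype ι] [DecidableEq ι] [CommRing R] [StarRing R]

/-- The set of symmetric matrices `Q Qᵀ` with `Q` special unitary of `k`-th column `W`. The paper's
`S_W` is the case `ι = Fin 3`, `k = 0` over `ℂ`. -/
def symmetricFiber (k : ι) (W : ι → R) : Set (Matrix ι ι R) :=
  {x | ∃ Q ∈ specialUnitaryGroup ι R, Q *ᵥ Pi.single k 1 = W ∧ x = Q * Qᵀ}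

theorem mulVec_star_eq_iff_isSelfAdjoint {Q : Matrix ι ι R} (hQ : Q ∈ unitaryGroup ι R)
    (v : ι → R) : (Q * Qᵀ) *ᵥ star v = v ↔ IsSelfAdjoint (star Q *ᵥ v) := by
  have star_coords : star (star Q *ᵥ v) = Qᵀ *ᵥ star v := by
    rw [star_mulVec, star_eq_conjTranspose, conjTranspose_conjTranspose, mulVec_transpose]
  rw [isSelfAdjoint_iff, star_coords, ← mulVec_mulVec]
  constructor
  · intro h
    calc Qᵀ *ᵥ star v = star Q *ᵥ (Q *ᵥ (Qᵀ *ᵥ star v)) := by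
          rw [mulVec_mulVec, mem_unitaryGroup_iff'.mp hQ, one_mulVec]
      _ = star Q *ᵥ v := by rw [h]
  · intro h
    rw [h, mulVec_mulVec, mem_unitaryGroup_iff.mp hQ, one_mulVec]

theorem mulVec_star_of_mem_symmetricFiber {k : ι} {W : ι → R} {x : Matrix ι ι R}
    (hx : x ∈ symmetricFiber k W) : x *ᵥ star W = W := by
  obtain ⟨Q, hQ, rfl, rfl⟩ := hx
  rw [mulVec_star_eq_iff_isSelfAdjoint hQ.1, mulVec_mulVec, mem_unitaryGroup_iff'.mp hQ.1,
    one_mulVec, isSelfAdjoint_iff, Pi.star_single, star_one]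

theorem star_dotProduct_self_of_mem_symmetricFiber {k : ι} {W : ι → R} {x : Matrix ι ι R}
    (hx : x ∈ symmetricFiber k W) : star W ⬝ᵥ W = 1 := by
  obtain ⟨Q, hQ, rfl, -⟩ := hx
  rw [star_mulVec, ← dotProduct_mulVec, mulVec_mulVec, ← star_eq_conjTranspose,
    mem_unitaryGroup_iff'.mp hQ.1, one_mulVec, dotProduct_single_one, Pi.star_apply,
    Pi.single_eq_same, star_one]

theorem isSelfAdjoint_star_mulVec_of_symmetricFiber_subset {k : ι} {Z W : ι → R}
    (h : symmetricFiber k Z ⊆ symmetricFiber k W) {Q : Matrix ι ι R}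
    (hQ : Q ∈ specialUnitaryGroup ι R) (hQZ : Q *ᵥ Pi.single k 1 = Z) :
    IsSelfAdjoint (star Q *ᵥ W) :=
  (mulVec_star_eq_iff_isSelfAdjoint hQ.1 W).mp <|
    mulVec_star_of_mem_symmetricFiber (h ⟨Q, hQ, hQZ, rfl⟩)

theorem diagonal_mem_unitaryGroup {d : ι → R} (hd : d ∈ unitary (ι → R)) :
    diagonal d ∈ unitaryGroup ι R := by
  rw [mem_unitaryGroup_iff, star_eq_conjTranspose, diagonal_conjTranspose, diagonal_mul_diagonal,
    ← diagonal_one]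
  exact congrArg diagonal (Unitary.mul_star_self_of_mem hd)

/-- For `i ≠ j`, the diagonal matrix with entries `u` at `i`, `star u` at `j` and `1` elsewhere. It
serves to rescale two columns of a special unitary matrix by opposite phases. -/
def phasePair (i j : ι) (u : R) : Matrix ι ι R :=
  diagonal (Pi.mulSingle i u * Pi.mulSingle j (star u))

theorem phasePair_mem_specialUnitaryGroup (i j : ι) {u : R} (hu : u ∈ unitary R) :
    phasePair i j u ∈ specialUnitaryGroup ι R := by
  refine mem_specialUnitaryGroup_iff.mpr ⟨diagonal_mem_unitaryGroup <| mul_mem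
    (mulSingle_mem_unitary i hu) (mulSingle_mem_unitary j (Unitary.star_mem hu)), ?_⟩
  simp only [phasePair, det_diagonal, Pi.mul_apply, Finset.prod_mul_distrib,
    Fintype.prod_pi_mulSingle', Unitary.mul_star_self_of_mem hu]

theorem symmetricFiber_subset_symmetricFiber_neg [Nontrivial ι] (k : ι) (W : ι → R) :
    symmetricFiber k W ⊆ symmetricFiber k (-W) := by
  rintro _ ⟨Q, hQ, rfl, rfl⟩
  obtain ⟨j, hjk⟩ := exists_ne k
  have hP : phasePair k j (-1 : R) ∈ specialUnitaryGroup ι R :=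
    phasePair_mem_specialUnitaryGroup k j (by simp [Unitary.mem_iff])
  have hP_transpose : phasePair k j (-1 : R) * (phasePair k j (-1))ᵀ = 1 := by
    simpa [phasePair, diagonal_conjTranspose, star_eq_conjTranspose] using
      mem_unitaryGroup_iff.mp hP.1
  have hP_column : phasePair k j (-1 : R) *ᵥ Pi.single k 1 = -Pi.single k 1 := by
    simp [phasePair, hjk.symm, Pi.single_neg]
  refine ⟨Q * phasePair k j (-1), mul_mem hQ hP, ?_, ?_⟩
  · rw [← mulVec_mulVec, hP_column, mulVec_neg]
  · rw [transpose_mul, Matrix.mul_assoc, ← Matrix.mul_assoc (phasePair k j (-1)), hP_transpose,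
      Matrix.one_mul]

theorem symmetricFiber_neg [Nontrivial ι] (k : ι) (W : ι → R) :
    symmetricFiber k (-W) = symmetricFiber k W :=
  (neg_neg W ▸ symmetricFiber_subset_symmetricFiber_neg k (-W)).antisymm
    (symmetricFiber_subset_symmetricFiber_neg k W)

end StarRing

section RCLike

variable {ι 𝕜 : Type*} [Fintype ι] [DecidableEq ι] [RCLike 𝕜]

theorem exists_mem_unitaryGroup_mulVec_single_eq (k : ι) {Z : ι → 𝕜} (hZ : ∑ i, ‖Z i‖ ^ 2 = 1) :
    ∃ U ∈ unitaryGroup ι 𝕜, U *ᵥ Pi.single k 1 = Z := by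
  have orthonormal_singleton : Orthonormal 𝕜
      (({k} : Set ι).domRestrict fun _ => (WithLp.toLp 2 Z : EuclideanSpace 𝕜 ι)) :=
    ⟨fun _ => by simp [EuclideanSpace.norm_eq, hZ],
      fun i j hij => absurd (Subsingleton.elim i j) hij⟩
  obtain ⟨b, hb⟩ := orthonormal_singleton.exists_orthonormalBasis_extension_of_card_eq (by simp)
  refine ⟨_, (EuclideanSpace.basisFun ι 𝕜).toMatrix_orthonormalBasis_mem_unitary b, ?_⟩
  ext i
  simp [Module.Basis.toMatrix_apply, hb k rfl]

theorem exists_mem_specialUnitaryGroup_mulVec_single_eq [Nontrivial ι] (k : ι) {Z : ι → 𝕜}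
    (hZ : ∑ i, ‖Z i‖ ^ 2 = 1) : ∃ Q ∈ specialUnitaryGroup ι 𝕜, Q *ᵥ Pi.single k 1 = Z := by
  obtain ⟨U, hU, rfl⟩ := exists_mem_unitaryGroup_mulVec_single_eq k hZ
  obtain ⟨j, hjk⟩ := exists_ne k
  have hdet : U.det ∈ unitary 𝕜 := det_of_mem_unitary hU
  refine ⟨U * diagonal (Pi.mulSingle j (star U.det)), mem_specialUnitaryGroup_iff.mpr ⟨mul_mem hU
    (diagonal_mem_unitaryGroup (mulSingle_mem_unitary j (Unitary.star_mem hdet))), ?_⟩, ?_⟩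
  · rw [det_mul, det_diagonal, Fintype.prod_pi_mulSingle', Unitary.mul_star_self_of_mem hdet]
  · rw [← mulVec_mulVec, diagonal_mulVec_single, Pi.mulSingle_eq_of_ne hjk.symm, one_mul]

end RCLike

section Complex

variable {ι : Type*} [Fintype ι] [DecidableEq ι]

theorem star_mulVec_apply_eq_zero_of_symmetricFiber_subset {k i j : ι} (hik : i ≠ k) (hjk : j ≠ k)
    (hij : i ≠ j) {Z W : ι → ℂ} (h : symmetricFiber k Z ⊆ symmetricFiber k W) {Q : Matrix ι ι ℂ}
    (hQ : Q ∈ specialUnitaryGroup ι ℂ) (hQZ : Q *ᵥ Pi.single k 1 = Z) : (star Q *ᵥ W) i = 0 := by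
  set P : Matrix ι ι ℂ := phasePair i j Complex.I with hP_def
  have hP : P ∈ specialUnitaryGroup ι ℂ :=
    phasePair_mem_specialUnitaryGroup i j (by simp [Unitary.mem_iff])
  have hP_column : P *ᵥ Pi.single k 1 = Pi.single k 1 := by
    simp [hP_def, phasePair, hik.symm, hjk.symm]
  have hP_coord : (star (Q * P) *ᵥ W) i = -Complex.I * (star Q *ᵥ W) i := by
    rw [star_mul, ← mulVec_mulVec]
    simp [hP_def, phasePair, star_eq_conjTranspose, mulVec_diagonal, hij]
  have coord_real : star ((star Q *ᵥ W) i) = (star Q *ᵥ W) i :=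
    congrFun (isSelfAdjoint_star_mulVec_of_symmetricFiber_subset h hQ hQZ) i
  have rotated_coord_real : star ((star (Q * P) *ᵥ W) i) = (star (Q * P) *ᵥ W) i :=
    congrFun (isSelfAdjoint_star_mulVec_of_symmetricFiber_subset h (mul_mem hQ hP)
      (by rw [← mulVec_mulVec, hP_column, hQZ])) i
  rw [hP_coord, star_mul', coord_real, star_neg, Complex.star_def, Complex.conj_I, neg_neg,
    neg_mul, self_eq_neg] at rotated_coord_real
  exact (mul_eq_zero.mp rotated_coord_real).resolve_left Complex.I_ne_zero

theorem exists_isSelfAdjoint_smul_of_symmetricFiber_subset (hι : 3 ≤ Fintype.card ι) {k : ι}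
    {Z W : ι → ℂ} (h : symmetricFiber k Z ⊆ symmetricFiber k W) {Q : Matrix ι ι ℂ}
    (hQ : Q ∈ specialUnitaryGroup ι ℂ) (hQZ : Q *ᵥ Pi.single k 1 = Z) :
    ∃ c : ℂ, IsSelfAdjoint c ∧ W = c • Z := by
  refine ⟨(star Q *ᵥ W) k,
    congrFun (isSelfAdjoint_star_mulVec_of_symmetricFiber_subset h hQ hQZ) k, ?_⟩
  have coords_eq_single : star Q *ᵥ W = (star Q *ᵥ W) k • Pi.single k 1 := by
    ext i
    rcases eq_or_ne i k with rfl | hik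
    · simp
    · obtain ⟨j, hji, hjk⟩ := ENat.exists_ne_ne_of_three_le (by simpa using mod_cast hι) i k
      simp [hik, star_mulVec_apply_eq_zero_of_symmetricFiber_subset hik hjk hji.symm h hQ hQZ]
  calc W = Q *ᵥ (star Q *ᵥ W) := by rw [mulVec_mulVec, mem_unitaryGroup_iff.mp hQ.1, one_mulVec]
    _ = (star Q *ᵥ W) k • Z := by rw [coords_eq_single, mulVec_smul, hQZ]; simp

theorem eq_or_eq_neg_of_symmetricFiber_subset (hι : 3 ≤ Fintype.card ι) {k : ι} {Z W : ι → ℂ}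
    (hne : (symmetricFiber k Z).Nonempty) (h : symmetricFiber k Z ⊆ symmetricFiber k W) :
    Z = W ∨ Z = -W := by
  obtain ⟨x, hx⟩ := hne
  have ⟨Q, hQ, hQZ, _⟩ := hx
  obtain ⟨c, hc, rfl⟩ := exists_isSelfAdjoint_smul_of_symmetricFiber_subset hι h hQ hQZ
  have c_mul_self : c * c = 1 := by
    simpa [star_smul, hc.star_eq, star_dotProduct_self_of_mem_symmetricFiber hx] using
      star_dotProduct_self_of_mem_symmetricFiber (h hx)
  rcases mul_self_eq_one_iff.mp c_mul_self with rfl | rfl <;> simp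

theorem stmt9_general (hι : 3 ≤ Fintype.card ι) (k : ι) (Z₁ Z₂ : ι → ℂ)
    (hZ₁ : ∑ i, ‖Z₁ i‖ ^ 2 = 1) :
    symmetricFiber k Z₁ = symmetricFiber k Z₂ ↔ Z₁ = Z₂ ∨ Z₁ = -Z₂ := by
  have : Nontrivial ι := Fintype.one_lt_card_iff_nontrivial.mp (by lia)
  constructor
  · intro h
    obtain ⟨Q, hQ, hQZ⟩ := exists_mem_specialUnitaryGroup_mulVec_single_eq k hZ₁
    exact eq_or_eq_neg_of_symmetricFiber_subset hι ⟨_, Q, hQ, hQZ, rfl⟩ h.subset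
  · rintro (rfl | rfl)
    · rfl
    · exact symmetricFiber_neg k Z₂

end Complex

/-- For unit vectors `Z₁, Z₂ ∈ ℂ³` and
`S_W = {Q·Qᵀ : Q ∈ SU(3), Q·e₁ = W}`, one has `S_{Z₁} = S_{Z₂}` iff `Z₁ = ±Z₂`. -/
theorem stmt9 (Z₁ Z₂ : Fin 3 → ℂ)
    (hZ₁ : ∑ i, ‖Z₁ i‖ ^ 2 = 1) (hZ₂ : ∑ i, ‖Z₂ i‖ ^ 2 = 1)
    (S : (Fin 3 → ℂ) → Set (Matrix (Fin 3) (Fin 3) ℂ))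
    (hS : ∀ W : Fin 3 → ℂ, S W =
      {x | ∃ Q ∈ Matrix.specialUnitaryGroup (Fin 3) ℂ,
            Q.mulVec (Pi.single 0 1) = W ∧ x = Q * Q.transpose}) :
    S Z₁ = S Z₂ ↔ Z₁ = Z₂ ∨ Z₁ = -Z₂ := by
  obtain rfl : S = symmetricFiber 0 := funext hS
  exact stmt9_general (by simp) 0 Z₁ Z₂ hZ₁
end

section
/- Let ε ∈ {1, −1} and let θ, H, C, λ₁, λ₂, λ₃, λ₄ be real numbers with cos θ ≠ 0, sin θ ≠ 0, cos θ + sin θ ≠ 0, and cos θ − sin θ ≠ 0, satisfying: ε·cos²θ = −λ₁² + H·λ₁ + C; ε·sin²θ = −λ₂² + H·λ₂ + C; ε·(cos θ + sin θ)² = −λ₃² + H·λ₃ + C; ε·(cos θ − sin θ)² = −λ₄² + H·λ₄ + C; ε·cos θ·sin θ·(cos θ + sin θ) = −λ₁·λ₃·sin θ − λ₂·λ₃·cos θ + λ₁·λ₂·(cos θ + sin θ); and −ε·cos θ·sin θ·(cos θ − sin θ) = λ₁·λ₄·sin θ − λ₂·λ₄·cos θ + λ₁·λ₂·(cos θ −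 sin θ). Then ((2C³ + 4ε(C² − 1))·H⁶ + C²·(15C² + 8Cε − 20)·H⁴ + 8C⁴·(3C − 4ε)·H² − 16C⁶) · ((2C² − 3)·H⁴ + 4C²·(C − 4ε)·H² − 16C⁴) = 0. -/
/-!
Let `c` and `s` be the coordinates of the normal. The mixed equation for the root `e₁ + e₂` reads
`(c + s) (l₁ l₂ - ε c s) = l₃ (l₁ s + l₂ c)`; for `ε = 1` it is the addition law of cotangents for
`l₁ / c`, `l₂ / s`, `l₃ / (c + s)`. Squaring it and using the Gauss equation for `l₃` eliminates
`l₃`; the root `e₁ - e₂` gives the same relation with `s` replaced by `-s`. Modulo the Gauss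
equations for `l₁` and `l₂`, the part of this relation even in `s` is `H (l₁ + l₂) + C = 0`, and
then the odd part collapses to `(H (l₁ - l₂))² = 0`. Since `c² ≠ s²` excludes `l₁ = l₂`, both `H`
and `C` vanish, and with them the polynomial.
-/

section RootSumRelation

variable {R : Type*} [CommRing R] {ε H C c s l₁ l₂ l₃ : R}

/-- The relation between the principal curvatures `l₁`, `l₂` in the directions `e₁`, `e₂` that
remains after eliminating the one in the direction `e₁ + e₂`, for the normal `c e₁ + s e₂`.
With `-s` in place of `s` it is the relation for the direction `e₁ - e₂`. -/
def RootSumRelation (ε H C c s l₁ l₂ : R) : Prop :=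
  (c + s) ^ 2 * ((l₁ ^ 2 + ε * c ^ 2) * (l₂ ^ 2 + ε * s ^ 2))
    = H * ((c + s) * (l₁ * l₂ - ε * c * s)) * (l₁ * s + l₂ * c) + C * (l₁ * s + l₂ * c) ^ 2

theorem rootSumRelation_of_gauss_of_cot_add
    (gauss : ε * (c + s) ^ 2 = -l₃ ^ 2 + H * l₃ + C)
    (cot_add : (c + s) * (l₁ * l₂ - ε * c * s) = l₃ * (l₁ * s + l₂ * c)) :
    RootSumRelation ε H C c s l₁ l₂ :=
  calc
    (c + s) ^ 2 * ((l₁ ^ 2 + ε * c ^ 2) * (l₂ ^ 2 + ε * s ^ 2))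
      = ((c + s) * (l₁ * l₂ - ε * c * s)) ^ 2
          + ε * (c + s) ^ 2 * (l₁ * s + l₂ * c) ^ 2 := by
        rw [sq_add_mul_sq_mul_sq_add_mul_sq]; ring
    _ = (l₃ * (l₁ * s + l₂ * c)) ^ 2
          + (-l₃ ^ 2 + H * l₃ + C) * (l₁ * s + l₂ * c) ^ 2 := by rw [cot_add, gauss]
    _ = H * (l₃ * (l₁ * s + l₂ * c)) * (l₁ * s + l₂ * c) + C * (l₁ * s + l₂ * c) ^ 2 := by ring
    _ = _ := by rw [cot_add]

variable [NoZeroDivisors R] [NeZero (2 : R)]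

theorem RootSumRelation.mul_add_add_eq_zero (hε : ε ≠ 0) (hc : c ≠ 0) (hs : s ≠ 0)
    (gauss₁ : ε * c ^ 2 = -l₁ ^ 2 + H * l₁ + C) (gauss₂ : ε * s ^ 2 = -l₂ ^ 2 + H * l₂ + C)
    (h_add : RootSumRelation ε H C c s l₁ l₂) (h_sub : RootSumRelation ε H C c (-s) l₁ l₂) :
    H * (l₁ + l₂) + C = 0 := by
  have even_part : 2 * ((c ^ 2 + s ^ 2) * ((l₁ ^ 2 + ε * c ^ 2) * (l₂ ^ 2 + ε * s ^ 2)))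
      = 2 * (H * (l₁ * l₂ * (l₂ * c ^ 2 + l₁ * s ^ 2) - ε * c ^ 2 * s ^ 2 * (l₁ + l₂))
        + C * (l₁ ^ 2 * s ^ 2 + l₂ ^ 2 * c ^ 2)) := by
    unfold RootSumRelation at h_add h_sub
    linear_combination h_add + h_sub
  have factored : 2 * 2 * ε * c ^ 2 * s ^ 2 * (H * (l₁ + l₂) + C) = 0 := by
    linear_combination even_part - 2 * c ^ 2 * (l₂ ^ 2 + ε * s ^ 2) * gauss₁
      - 2 * s ^ 2 * (l₁ ^ 2 + ε * c ^ 2) * gauss₂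
  have factor_ne_zero : 2 * 2 * ε * c ^ 2 * s ^ 2 ≠ 0 := by simp [hε, hc, hs, two_ne_zero]
  exact (mul_eq_zero.mp factored).resolve_left factor_ne_zero

theorem RootSumRelation.mul_sub_eq_zero (hc : c ≠ 0) (hs : s ≠ 0)
    (gauss₁ : ε * c ^ 2 = -l₁ ^ 2 + H * l₁ + C) (gauss₂ : ε * s ^ 2 = -l₂ ^ 2 + H * l₂ + C)
    (h_add : RootSumRelation ε H C c s l₁ l₂) (h_sub : RootSumRelation ε H C c (-s) l₁ l₂)
    (sum_eq_zero : H * (l₁ + l₂) + C = 0) :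
    H * (l₁ - l₂) = 0 := by
  have odd_part : 2 * ((l₁ ^ 2 + ε * c ^ 2) * (l₂ ^ 2 + ε * s ^ 2))
      = H * (l₁ * l₂ * (l₁ + l₂) - ε * (l₂ * c ^ 2 + l₁ * s ^ 2)) + 2 * C * (l₁ * l₂) := by
    have two_mul_ne_zero : 2 * c * s ≠ 0 := by simp [hc, hs, two_ne_zero]
    apply mul_left_cancel₀ two_mul_ne_zero
    unfold RootSumRelation at h_add h_sub
    linear_combination h_add - h_sub
  have norm₁ : l₁ ^ 2 + ε * c ^ 2 = -(H * l₂) := by linear_combination gauss₁ + sum_eq_zero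
  have norm₂ : l₂ ^ 2 + ε * s ^ 2 = -(H * l₁) := by linear_combination gauss₂ + sum_eq_zero
  rw [norm₁, norm₂] at odd_part
  have diff_sq_eq_zero : (H * (l₁ - l₂)) ^ 2 = 0 := by
    linear_combination -odd_part + H * l₂ * norm₁ + H * l₁ * norm₂ - 2 * l₁ * l₂ * sum_eq_zero
  exact (pow_eq_zero_iff two_ne_zero).mp diff_sq_eq_zero

end RootSumRelation

theorem stmt13_general {R : Type*} [CommRing R] [NoZeroDivisors R] [NeZero (2 : R)]
    {ε c s H C l₁ l₂ l₃ l₄ : R} (hε : ε ≠ 0) (hc : c ≠ 0) (hs : s ≠ 0)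
    (hcs : c + s ≠ 0) (hcs' : c - s ≠ 0)
    (e1 : ε * c ^ 2 = -l₁ ^ 2 + H * l₁ + C)
    (e2 : ε * s ^ 2 = -l₂ ^ 2 + H * l₂ + C)
    (e3 : ε * (c + s) ^ 2 = -l₃ ^ 2 + H * l₃ + C)
    (e4 : ε * (c - s) ^ 2 = -l₄ ^ 2 + H * l₄ + C)
    (e5 : ε * c * s * (c + s) = -l₁ * l₃ * s - l₂ * l₃ * c + l₁ * l₂ * (c + s))
    (e6 : -(ε * c * s * (c - s)) = l₁ * l₄ * s - l₂ * l₄ * c + l₁ * l₂ * (c - s)) :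
    H = 0 ∧ C = 0 := by
  have h_add : RootSumRelation ε H C c s l₁ l₂ :=
    rootSumRelation_of_gauss_of_cot_add e3 (by linear_combination -e5)
  have h_sub : RootSumRelation ε H C c (-s) l₁ l₂ :=
    rootSumRelation_of_gauss_of_cot_add (l₃ := l₄) (by linear_combination e4)
      (by linear_combination -e6)
  have sum_eq_zero := h_add.mul_add_add_eq_zero hε hc hs e1 e2 h_sub
  have l₁_ne_l₂ : l₁ - l₂ ≠ 0 := fun h ↦ by
    have : ε * ((c + s) * (c - s)) = 0 := by
      linear_combination e1 - e2 + (H - l₁ - l₂) * h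
    exact mul_ne_zero hε (mul_ne_zero hcs hcs') this
  have H_eq_zero : H = 0 :=
    (mul_eq_zero.mp (h_add.mul_sub_eq_zero hc hs e1 e2 h_sub sum_eq_zero)).resolve_right l₁_ne_l₂
  exact ⟨H_eq_zero, by simpa only [H_eq_zero, zero_mul, zero_add] using sum_eq_zero⟩

open Real in
/-- the polynomial relation for the mean curvature `H` obtained by
elimination in the `B₂` case of Proposition 4.1.
(Here `l₁, ..., l₄` stand for the principal curvatures `λ₁, ..., λ₄`.) -/
theorem stmt13 (ε θ H C l₁ l₂ l₃ l₄ : ℝ)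
    (hε : ε = 1 ∨ ε = -1)
    (hc : cos θ ≠ 0) (hs : sin θ ≠ 0)
    (hcs : cos θ + sin θ ≠ 0) (hcs' : cos θ - sin θ ≠ 0)
    (e1 : ε * cos θ ^ 2 = -l₁ ^ 2 + H * l₁ + C)
    (e2 : ε * sin θ ^ 2 = -l₂ ^ 2 + H * l₂ + C)
    (e3 : ε * (cos θ + sin θ) ^ 2 = -l₃ ^ 2 + H * l₃ + C)
    (e4 : ε * (cos θ - sin θ) ^ 2 = -l₄ ^ 2 + H * l₄ + C)
    (e5 : ε * cos θ * sin θ * (cos θ + sin θ)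
        = -l₁ * l₃ * sin θ - l₂ * l₃ * cos θ + l₁ * l₂ * (cos θ + sin θ))
    (e6 : -(ε * cos θ * sin θ * (cos θ - sin θ))
        = l₁ * l₄ * sin θ - l₂ * l₄ * cos θ + l₁ * l₂ * (cos θ - sin θ)) :
    ((2 * C ^ 3 + 4 * ε * (C ^ 2 - 1)) * H ^ 6
      + C ^ 2 * (15 * C ^ 2 + 8 * C * ε - 20) * H ^ 4
      + 8 * C ^ 4 * (3 * C - 4 * ε) * H ^ 2 - 16 * C ^ 6)
    * ((2 * C ^ 2 - 3) * H ^ 4 + 4 * C ^ 2 * (C - 4 * ε) * H ^ 2 - 16 * C ^ 4) = 0 := by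
  have hε₀ : ε ≠ 0 := by rcases hε with rfl | rfl <;> norm_num
  obtain ⟨rfl, rfl⟩ := stmt13_general hε₀ hc hs hcs hcs' e1 e2 e3 e4 e5 e6
  ring
end
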